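/- Let G act on a set X, let V be a G-module, and let f : X^{n+1} → V be a G-equivariant n-cocycle. Then the cochains ψ^{p,q}(x⃗, x⃗') := (-1)^p f(x⃗, x⃗') (for p+q = n-1) are G-equivariant, and the element Σ_{p+q=n-1} ψ^{p,q} of the total complex of the equivariant double complex (A^{*,*})^G has total coboundary j^n(f) − i^n(f). Hence the two images of f in the total complex of equivariant cochains are cohomologous. -/

import Mathlib

/-- The Alexander–Spanier differential. -/
def ASd {X V : Type*} [AddCommGroup V] (n : ℕ) (f : (Fin (n+1) → X) → V) :
    (Fin (n+2) → X) → V :=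
  fun x => ∑ i : Fin (n+2), (-1 : ℤ) ^ (i : ℕ) • f (x ∘ i.succAbove)

/-- Horizontal differential of the double complex. -/
def dh {X V : Type*} [AddCommGroup V] (p q : ℕ)
    (f : (Fin (p+1) → X) × (Fin (q+1) → X) → V) :
    (Fin (p+2) → X) × (Fin (q+1) → X) → V :=
  fun z => ∑ i : Fin (p+2), (-1 : ℤ) ^ (i : ℕ) • f (z.1 ∘ i.succAbove, z.2)

/-- Vertical differential of the double complex. -/
def dv {X V : Type*} [AddCommGroup V] (p q : ℕ)
    (f : (Fin (p+1) → X) × (Fin (q+1) → X) → V) :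
    (Fin (p+1) → X) × (Fin (q+2) → X) → V :=
  fun z => (-1 : ℤ) ^ p • ∑ i : Fin (q+2), (-1 : ℤ) ^ (i : ℕ) • f (z.1, z.2 ∘ i.succAbove)

/-- The diagonal `G`-action on bidegree `(p,q)` cochains. -/
def gactD {G X V : Type*} [Group G] [MulAction G X] [AddCommGroup V]
    [DistribMulAction G V] (g : G) (p q : ℕ)
    (f : (Fin (p+1) → X) × (Fin (q+1) → X) → V) :
    (Fin (p+1) → X) × (Fin (q+1) → X) → V :=
  fun z => g • f (fun i => g⁻¹ • z.1 i, fun i => g⁻¹ • z.2 i)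

/-- `ψ^{p,q}(x⃗,x⃗') = (-1)^p f(x⃗,x⃗')` for `p + q = n - 1` (`n = m+1`). -/
def psi {X V : Type*} [AddCommGroup V] (m p q : ℕ) (hpq : p + q = m)
    (f : (Fin (m+2) → X) → V) : (Fin (p+1) → X) × (Fin (q+1) → X) → V :=
  fun z => (-1 : ℤ) ^ p •
    f (fun i => Fin.append z.1 z.2 (Fin.cast (by omega) i))

theorem append_dite {X : Type*} {a b : ℕ} (x : Fin a → X) (y : Fin b → X) (i : Fin (a+b)) :
    Fin.append x y i = if h : (i : ℕ) < a then x ⟨i, h⟩ else y ⟨i - a, by omega⟩ := by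
  refine Fin.addCases (fun j => ?_) (fun j => ?_) i
  · simp
  · simp

theorem succAbove_mk {n : ℕ} (k : Fin (n+1)) (i : Fin n) :
    k.succAbove i = ⟨if (i : ℕ) < k then i else i + 1, by split <;> omega⟩ := by
  apply Fin.ext
  simp only [Fin.succAbove, Fin.lt_def, Fin.val_castSucc]
  split <;> simp

theorem cocycle_split {X V : Type*} [AddCommGroup V] (m p q : ℕ) (hpq : p + q = m + 1)
    (f : (Fin (m+2) → X) → V) (hf : ASd (m+1) f = 0)
    (x : Fin (p+1) → X) (y : Fin (q+1) → X) :
    (∑ i : Fin (p+1), (-1 : ℤ) ^ (i : ℕ) •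
        f (fun k => Fin.append (x ∘ i.succAbove) y (Fin.cast (by omega) k)))
      + (-1 : ℤ) ^ (p+1) • (∑ j : Fin (q+1), (-1 : ℤ) ^ (j : ℕ) •
        f (fun k => Fin.append x (y ∘ j.succAbove) (Fin.cast (by omega) k))) = 0 := by
  have e : (p+1) + (q+1) = m + 1 + 2 := by omega
  have h := congrFun hf (fun k => Fin.append x y (Fin.cast e.symm k))
  simp only [ASd, Pi.zero_apply] at h
  rw [← Equiv.sum_comp (finCongr e), Fin.sum_univ_add] at h
  rw [← h, Finset.smul_sum]
  congr 1
  · refine Finset.sum_congr rfl fun i _ => ?_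
    congr 2
    funext k
    have := i.2
    have := k.2
    simp only [append_dite, succAbove_mk, Function.comp, finCongr_apply, Fin.val_cast,
      Fin.val_castAdd]
    repeat' split
    all_goals first | rfl | omega | (congr 1; apply Fin.ext; simp only []; omega)
  · refine Finset.sum_congr rfl fun i _ => ?_
    rw [smul_smul, ← pow_add]
    congr 2
    funext k
    have := i.2
    have := k.2
    simp only [append_dite, succAbove_mk, Function.comp, finCongr_apply, Fin.val_cast,
      Fin.val_natAdd]
    repeat' split
    all_goals first | rfl | omega | (congr 1; apply Fin.ext; simp only []; omega)

/-- For a `G`-equivariant `n`-cocycle `f` (`n = m+1`), the cochains `ψ^{p,q}` are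
`G`-equivariant and the total coboundary of `∑_{p+q=n-1} ψ^{p,q}` in the equivariant
total complex is `j^n(f) − i^n(f)`; hence the two images of `f` are cohomologous
in the total complex of equivariant cochains. -/
theorem stmt6 (G X V : Type*) [Group G] [MulAction G X] [AddCommGroup V]
    [DistribMulAction G V] (m : ℕ) (f : (Fin (m+2) → X) → V)
    (heq : ∀ (g : G) (x : Fin (m+2) → X), f (fun i => g • x i) = g • f x)
    (hf : ASd (m+1) f = 0) :
    -- each ψ^{p,q} is G-equivariant
    (∀ (g : G) p q (h : p + q = m), gactD g p q (psi m p q h f) = psi m p q h f) ∧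
    -- interior components of the total differential vanish
    (∀ p q (h : p + q + 1 = m),
        dh p (q+1) (psi m p (q+1) (by omega) f)
          + dv (p+1) q (psi m (p+1) q (by omega) f) = 0) ∧
    -- component in bidegree (0, n) is j^n(f)
    (dv 0 m (psi m 0 m (by omega) f) = fun z => f z.2) ∧
    -- component in bidegree (n, 0) is -i^n(f)
    (dh m 0 (psi m m 0 (by omega) f) = fun z => - f z.1) := by
  refine ⟨?_, ?_, ?_, ?_⟩
  · intro g p q h
    funext z
    simp only [gactD, psi]
    rw [smul_comm g, ← heq]
    congr 2
    funext i
    simp only [append_dite]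
    split_ifs <;> simp
  · intro p q h
    funext z
    have H := cocycle_split m (p+1) (q+1) (by omega) f hf z.1 z.2
    have H2 := congrArg (fun v => (-1 : ℤ) ^ p • v) H
    simp only [smul_zero, smul_add] at H2
    simp only [dh, dv, psi, Pi.add_apply, Pi.zero_apply]
    rw [← H2]
    simp only [Finset.smul_sum, smul_smul]
    congr 1
    · refine Finset.sum_congr rfl fun i _ => ?_
      rw [mul_comm]
    · refine Finset.sum_congr rfl fun i _ => ?_
      congr 1
      ring
  · funext z
    have H := cocycle_split m 0 (m+1) (by omega) f hf z.1 z.2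
    simp only [dv, psi, pow_zero, one_smul]
    have S : ∀ F : Fin (0+1) → V, ∑ i, F i = F 0 := fun F => Fin.sum_univ_one F
    rw [S] at H
    simp only [zero_add, pow_one, neg_smul, one_smul, Fin.val_zero, pow_zero] at H
    rw [add_neg_eq_zero] at H
    refine H.symm.trans ?_
    congr 1
    funext k
    simp [append_dite]
  · funext z
    have H := cocycle_split m (m+1) 0 (by omega) f hf z.1 z.2
    have S : ∀ F : Fin (0+1) → V, ∑ i, F i = F 0 := fun F => Fin.sum_univ_one F
    rw [S] at H
    simp only [Fin.val_zero, pow_zero, one_smul] at H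
    have e : (fun k => Fin.append z.1 (z.2 ∘ (0 : Fin (0+1)).succAbove)
        (Fin.cast (by omega) k)) = z.1 := by
      funext k
      have := k.2
      simp [append_dite]
    rw [e] at H
    have H2 := congrArg (fun v => (-1 : ℤ) ^ m • v) H
    simp only [smul_zero, smul_add, smul_smul] at H2
    have s : (-1 : ℤ) ^ m * (-1) ^ (m + 1 + 1) = 1 := by
      rw [← pow_add]; exact Even.neg_one_pow ⟨m+1, by ring⟩
    rw [s, one_smul] at H2
    simp only [dh, psi]
    rw [← eq_neg_iff_add_eq_zero] at H2
    rw [← H2, Finset.smul_sum]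
    exact Finset.sum_congr rfl fun i _ => smul_comm _ _ _
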